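/- Let q be a prime power with q ≡ 1 (mod 52) and let β be a primitive 13th root of unity in F_q. Then (q,26) gives a 3-design if and only if the sequence (χ(1−β), χ(1−β²), χ(1−β³), χ(1−β⁴), χ(1−β⁵), χ(1−β⁶)) is, up to a global sign, one of the following four sequences: (1,1,−1,1,−1,−1), (1,1,−1,−1,−1,1), (1,−1,1,1,−1,−1), (1,−1,1,−1,−1,1). Here χ is the quadratic residue character of F_q. -/

import Mathlib

/-!
Setting: `F` is a finite field of order `q`. The projective line `PG(1,q)` is
modelled as `Projectivization F (Fin 2 → F)`. Since scalar matrices act trivially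
on the projective line, the images of a set under all elements of `SL(2,F)` form
exactly its `PSL(2,F)`-orbit; `mapSL g` is the map of the projective line induced
by `g : SL(2,F)`. For `k ∣ q - 1`, the unique subgroup of order `k` of `Fˣ` is the
set of `k`-th roots of unity `{x : F | x ^ k = 1}`, embedded into the projective
line via `x ↦ [x : 1]`. `(q, k)` gives a 3-design iff there is `lam > 0` such that
every 3-subset of the projective line lies in exactly `lam` blocks of the orbit.
-/

noncomputable section

open Matrix

/-- The point at infinity `[1 : 0]` of the projective line over `F`. -/
def inftyPt (F : Type) [Field F] : Projectivization F (Fin 2 → F) :=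
  Projectivization.mk F ![1, 0] (by
    intro h
    simpa using congrFun h 0)

/-- The embedding of `F` into the projective line, `x ↦ [x : 1]`. -/
def embedPt (F : Type) [Field F] (x : F) : Projectivization F (Fin 2 → F) :=
  Projectivization.mk F ![x, 1] (by
    intro h
    simpa using congrFun h 1)

/-- The action of `g : SL(2,F)` on the projective line (as linear fractional
transformation). -/
def mapSL {F : Type} [Field F] (g : Matrix.SpecialLinearGroup (Fin 2) F) :
    Projectivization F (Fin 2 → F) → Projectivization F (Fin 2 → F) :=
  Projectivization.map (Matrix.SpecialLinearGroup.toLin' g : (Fin 2 → F) →ₗ[F] (Fin 2 → F))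
    (Matrix.SpecialLinearGroup.toLin' g).injective

/-- The starter block: the unique subgroup of order `k` of `Fˣ` (the `k`-th roots
of unity, for `k ∣ q - 1`), regarded as a subset of the projective line. -/
def starterB (F : Type) [Field F] (k : ℕ) : Set (Projectivization F (Fin 2 → F)) :=
  embedPt F '' {x : F | x ^ k = 1}

/-- The `PSL(2,F)`-orbit `GB` of the starter block. -/
def designBlocks (F : Type) [Field F] (k : ℕ) :
    Set (Set (Projectivization F (Fin 2 → F))) :=
  {S | ∃ g : Matrix.SpecialLinearGroup (Fin 2) F, S = mapSL g '' starterB F k}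

/-- `GB` is the block set of a `3-(q+1, k, lam)` design: `lam` is positive and every
3-subset of the projective line is contained in exactly `lam` blocks. -/
def isThreeDesign (F : Type) [Field F] (k lam : ℕ) : Prop :=
  0 < lam ∧
    ∀ T : Finset (Projectivization F (Fin 2 → F)), T.card = 3 →
      {S ∈ designBlocks F k | (T : Set (Projectivization F (Fin 2 → F))) ⊆ S}.ncard = lam

/-- `(q, k)` gives a 3-design. -/
def gives3Design (F : Type) [Field F] (k : ℕ) : Prop :=
  ∃ lam : ℕ, isThreeDesign F k lam

/-- The sequence `(χ(1-β), χ(1-β²), …, χ(1-β⁶))` is, up to a global sign `ε`, one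
of the four sequences `(1,1,-1,1,-1,-1)`, `(1,1,-1,-1,-1,1)`, `(1,-1,1,1,-1,-1)`,
`(1,-1,1,-1,-1,1)`. -/
def goodChiSequence (F : Type) [Field F] [Fintype F] [DecidableEq F] (β : F) : Prop :=
  ∃ ε : ℤ, (ε = 1 ∨ ε = -1) ∧
    ((quadraticChar F (1 - β), quadraticChar F (1 - β ^ 2), quadraticChar F (1 - β ^ 3),
        quadraticChar F (1 - β ^ 4), quadraticChar F (1 - β ^ 5), quadraticChar F (1 - β ^ 6)) =
          (ε, ε, -ε, ε, -ε, -ε) ∨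
      (quadraticChar F (1 - β), quadraticChar F (1 - β ^ 2), quadraticChar F (1 - β ^ 3),
        quadraticChar F (1 - β ^ 4), quadraticChar F (1 - β ^ 5), quadraticChar F (1 - β ^ 6)) =
          (ε, ε, -ε, -ε, -ε, ε) ∨
      (quadraticChar F (1 - β), quadraticChar F (1 - β ^ 2), quadraticChar F (1 - β ^ 3),
        quadraticChar F (1 - β ^ 4), quadraticChar F (1 - β ^ 5), quadraticChar F (1 - β ^ 6)) =
          (ε, -ε, ε, ε, -ε, -ε) ∨
      (quadraticChar F (1 - β), quadraticChar F (1 - β ^ 2), quadraticChar F (1 - β ^ 3),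
        quadraticChar F (1 - β ^ 4), quadraticChar F (1 - β ^ 5), quadraticChar F (1 - β ^ 6)) =
          (ε, -ε, ε, -ε, -ε, ε))

/-!
Write `[u, v]` for the determinant of two vectors of `F²`. The quadratic character of
`[p, q] [q, r] [r, p]` is a complete `SL(2, q)`-orbit invariant on ordered triples of distinct
points, and an element of `GL(2, q)` of non-square determinant exchanges its two values. Hence a
block orbit is a 3-design iff the triples inside the starter block `B` have total sign zero. For
`B = μ₂₆` homogeneity turns this total into a multiple of `∑ χ(1 - a) χ(1 - b) χ(1 - ab)` over
`a, b ∈ μ₂₆`.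

Since `μ₂₆ = ±μ₁₃` and `χ(1 + x) = χ(1 - x²) χ(1 - x)`, that sum is a polynomial in `χ(2)` and the
signs `uᵢ = χ(1 - β ^ 2 ^ i)`. The index matters only modulo 6, because `2` is a primitive root
modulo 13 and `χ(1 - β ^ n)` is even in `n`. The polynomial vanishes when `uᵢ₊₃ = -uᵢ` for all `i`,
and inspecting the `2 ^ 7` sign patterns shows that it has no other zero. These equations describe
exactly the eight sequences.
-/

open scoped LinearAlgebra.Projectivization Pointwise

section OrbitCounting

variable {G X : Type*} [Group G] [MulAction G X]

/-- The number of blocks in the `G`-orbit of `B` that contain all three entries of `t`. Triples are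
ordered, and their entries may coincide. -/
def tripleDegree (G : Type*) [Group G] [MulAction G X] (B : Set X) (t : X × X × X) : ℕ :=
  {S ∈ MulAction.orbit G B | t ∈ S ×ˢ S ×ˢ S}.ncard

/-- The sum of a weight `σ` over the ordered triples of points of `S`. -/
def tripleSum [Fintype X] (σ : X × X × X → ℤ) (S : Set X) : ℤ :=
  ∑ t, (S ×ˢ S ×ˢ S).indicator σ t

lemma smul_mem_prod_smul_set_iff (g : G) (S : Set X) (t : X × X × X) :
    g • t ∈ (g • S) ×ˢ (g • S) ×ˢ (g • S) ↔ t ∈ S ×ˢ S ×ˢ S := by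
  simp only [Set.mem_prod, Prod.smul_fst, Prod.smul_snd, Set.smul_mem_smul_set_iff]

lemma tripleDegree_smul (g : G) (B : Set X) (t : X × X × X) :
    tripleDegree G B (g • t) = tripleDegree G B t := by
  refine (Set.ncard_congr (fun S _ ↦ g • S) ?_ (fun S T _ _ h ↦ smul_left_cancel g h) ?_).symm
  · rintro S ⟨hS, ht⟩
    exact ⟨MulAction.mem_orbit_of_mem_orbit _ hS, (smul_mem_prod_smul_set_iff g S t).2 ht⟩
  · rintro S ⟨hS, ht⟩
    refine ⟨g⁻¹ • S, ⟨MulAction.mem_orbit_of_mem_orbit _ hS, ?_⟩, smul_inv_smul g S⟩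
    rwa [← smul_mem_prod_smul_set_iff g, smul_inv_smul]

variable [Fintype X]

lemma tripleSum_smul {σ : X × X × X → ℤ} (hσ : ∀ (g : G) t, σ (g • t) = σ t) (g : G) (S : Set X) :
    tripleSum σ (g • S) = tripleSum σ S := by
  classical
  rw [tripleSum, ← Equiv.sum_comp (MulAction.toPerm g), tripleSum]
  simp only [MulAction.toPerm_apply, Set.indicator_apply, smul_mem_prod_smul_set_iff, hσ]

lemma tripleSum_range {ι : Type*} [Fintype ι] {e : ι → X} (he : Function.Injective e)
    (σ : X × X × X → ℤ) :
    tripleSum σ (Set.range e) = ∑ x, ∑ y, ∑ z, σ (e x, e y, e z) := by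
  simp only [← Fintype.sum_prod_type']
  refine (Fintype.sum_of_injective (Prod.map e (Prod.map e e)) (he.prodMap (he.prodMap he)) _
    ((Set.range e ×ˢ Set.range e ×ˢ Set.range e).indicator σ)
    (fun t ht ↦ Set.indicator_of_notMem ?_ σ) fun t ↦ (Set.indicator_of_mem ?_ σ).symm).symm
  · rwa [Set.range_prodMap, Set.range_prodMap] at ht
  · simp

lemma sum_mul_tripleDegree {σ : X × X × X → ℤ} (hσ : ∀ (g : G) t, σ (g • t) = σ t) (B : Set X) :
    ∑ t, σ t * tripleDegree G B t = (MulAction.orbit G B).ncard * tripleSum σ B := by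
  classical
  have hfin : (MulAction.orbit G B).Finite := Set.toFinite _
  have degree_eq (t : X × X × X) :
      tripleDegree G B t = (hfin.toFinset.filter fun S ↦ t ∈ S ×ˢ S ×ˢ S).card := by
    rw [tripleDegree, ← Set.ncard_coe_finset]
    simp
  calc ∑ t, σ t * tripleDegree G B t
      = ∑ t, ∑ S ∈ hfin.toFinset, (S ×ˢ S ×ˢ S).indicator σ t := by
        simp only [degree_eq, Finset.card_filter, Nat.cast_sum, Nat.cast_ite, Finset.mul_sum,
          Set.indicator_apply, Nat.cast_one, Nat.cast_zero, mul_ite, mul_one, mul_zero]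
    _ = ∑ S ∈ hfin.toFinset, tripleSum σ S := Finset.sum_comm
    _ = ∑ _S ∈ hfin.toFinset, tripleSum σ B := by
        refine Finset.sum_congr rfl fun S hS ↦ ?_
        obtain ⟨g, rfl⟩ := hfin.mem_toFinset.1 hS
        exact tripleSum_smul hσ g B
    _ = (MulAction.orbit G B).ncard * tripleSum σ B := by
        rw [Finset.sum_const, nsmul_eq_mul, Set.ncard_eq_toFinset_card _ hfin]

end OrbitCounting

lemma sum_sign_mul_eq_zero_iff {Ω : Type*} [Fintype Ω] {σ N : Ω → ℤ}
    (hσ : ∀ t, σ t = 0 ∨ σ t = 1 ∨ σ t = -1) (hsum : ∑ t, σ t = 0)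
    (hN : ∀ s t, σ s ≠ 0 → σ s = σ t → N s = N t) :
    ∑ t, σ t * N t = 0 ↔ ∀ s t, σ s ≠ 0 → σ t ≠ 0 → N s = N t := by
  refine ⟨fun hzero ↦ ?_, fun hconst ↦ ?_⟩
  · suffices hopp : ∀ s t, σ s = 1 → σ t = -1 → N s = N t by
      intro s t hs ht
      rcases hσ s with h | h | h <;> rcases hσ t with h' | h' | h' <;> grind
    intro s t hs ht
    -- On the support of `σ` we have `2 N = (N s + N t) + (N s - N t) σ`.
    have hsplit : 2 * ∑ r, σ r * N r = (N s + N t) * ∑ r, σ r + (N s - N t) * ∑ r, σ r ^ 2 := by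
      simp only [Finset.mul_sum, ← Finset.sum_add_distrib]
      refine Finset.sum_congr rfl fun r _ ↦ ?_
      rcases hσ r with h | h | h
      · simp [h]
      · rw [hN r s (by simp [h]) (h.trans hs.symm), h]; ring
      · rw [hN r t (by simp [h]) (h.trans ht.symm), h]; ring
    have hpos : 0 < ∑ r, σ r ^ 2 :=
      Finset.sum_pos' (fun r _ ↦ sq_nonneg (σ r)) ⟨s, Finset.mem_univ s, by simp [hs]⟩
    rw [hzero, hsum, mul_zero, mul_zero, zero_add, eq_comm, mul_eq_zero] at hsplit
    exact sub_eq_zero.1 (hsplit.resolve_right hpos.ne')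
  · by_cases hex : ∃ s, σ s ≠ 0
    · obtain ⟨s, hs⟩ := hex
      have hmul (t : Ω) : σ t * N t = σ t * N s := by
        by_cases ht : σ t = 0
        · simp [ht]
        · rw [hconst t s ht hs]
      simp only [hmul, ← Finset.sum_mul, hsum, zero_mul]
    · push Not at hex
      simp [hex]

section ProjectiveLine

variable {F : Type} [Field F]

/-- The determinant of the matrix with rows `u` and `v`. It vanishes iff `u` and `v` represent the
same point of the projective line. -/
def bracket (u v : Fin 2 → F) : F := (Matrix.of ![u, v]).det

lemma bracket_apply (u v : Fin 2 → F) : bracket u v = u 0 * v 1 - u 1 * v 0 := by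
  simp [bracket, Matrix.det_fin_two]

lemma bracket_swap (u v : Fin 2 → F) : bracket u v = -bracket v u := by
  simp only [bracket_apply]; ring

lemma bracket_smul_smul (a b : F) (u v : Fin 2 → F) :
    bracket (a • u) (b • v) = a * b * bracket u v := by
  simp only [bracket_apply, Pi.smul_apply, smul_eq_mul]; ring

lemma bracket_mulVec (A : Matrix (Fin 2) (Fin 2) F) (u v : Fin 2 → F) :
    bracket (A *ᵥ u) (A *ᵥ v) = A.det * bracket u v := by
  simp only [bracket_apply, Matrix.det_fin_two, Matrix.mulVec, dotProduct, Fin.sum_univ_two]; ring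

lemma bracket_smul_add_bracket_smul (u v w : Fin 2 → F) :
    bracket w v • u + bracket u w • v = bracket u v • w := by
  ext i
  fin_cases i <;> simp [bracket_apply] <;> ring

lemma bracket_rep_ne_zero_iff {p q : ℙ F (Fin 2 → F)} : bracket p.rep q.rep ≠ 0 ↔ p ≠ q := by
  rw [← Projectivization.linearIndependent_pair_iff_ne, bracket, ← isUnit_iff_ne_zero,
    ← Matrix.isUnit_iff_isUnit_det, ← Matrix.linearIndependent_rows_iff_isUnit]
  rfl

lemma embedPt_injective : Function.Injective (embedPt F) := by
  intro x y hxy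
  obtain ⟨a, ha⟩ := (Projectivization.mk_eq_mk_iff' ..).1 hxy
  have h₀ := congrFun ha 0
  have h₁ := congrFun ha 1
  simp only [Pi.smul_apply, smul_eq_mul, Matrix.cons_val_zero, Matrix.cons_val_one, mul_one]
    at h₀ h₁
  rw [← h₀, h₁, one_mul]

lemma starterB_eq_range (k : ℕ) [NeZero k] :
    starterB F k = Set.range fun x : rootsOfUnity k F ↦ embedPt F (x : Fˣ) := by
  rw [starterB, ← Function.comp_def (embedPt F), Set.range_comp]
  congr 1
  ext x
  refine ⟨fun hx ↦ ⟨rootsOfUnity.mkOfPowEq x hx, rfl⟩, ?_⟩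
  rintro ⟨y, rfl⟩
  exact (mem_rootsOfUnity' k _).1 y.2

lemma embedPt_rootsOfUnity_injective (k : ℕ) :
    Function.Injective fun x : rootsOfUnity k F ↦ embedPt F (x : Fˣ) :=
  embedPt_injective.comp (Units.val_injective.comp Subtype.val_injective)

lemma designBlocks_eq_orbit (k : ℕ) :
    designBlocks F k = MulAction.orbit (SpecialLinearGroup (Fin 2) F) (starterB F k) :=
  Set.ext fun _ ↦ exists_congr fun _ ↦ eq_comm

lemma exists_SL_mulVec_eq_smul {d : F} {u v w : Fin 2 → F}
    (hD : bracket u v * bracket v w * bracket w u ≠ 0) (hd : d ≠ 0)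
    (hsq : IsSquare (d * (bracket u v * bracket v w * bracket w u))) :
    ∃ (g : SpecialLinearGroup (Fin 2) F) (a b c : F),
      g.1 *ᵥ ![1, 0] = a • u ∧ g.1 *ᵥ ![0, 1] = b • v ∧ g.1 *ᵥ ![d, 1] = c • w := by
  obtain ⟨s, hs⟩ := hsq
  have hs₀ : s ≠ 0 := by
    rintro rfl
    exact mul_ne_zero hd hD (by simpa using hs)
  -- `bracket_smul_add_bracket_smul` dictates the ratio of `a` and `b`; dividing by the square root
  -- `s` normalises the determinant.
  let a := bracket w v / s
  let b := d * bracket u w / s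
  let A : Matrix (Fin 2) (Fin 2) F := !![a * u 0, b * v 0; a * u 1, b * v 1]
  have hA : A.det = 1 := by
    have hdet : A.det = a * b * bracket u v := by
      simp only [A, Matrix.det_fin_two_of, bracket_apply]; ring
    rw [hdet]
    simp only [a, b, bracket_swap w v, bracket_swap u w]
    field_simp
    linear_combination hs
  have hAx (x y : F) : A *ᵥ ![x, y] = (x * a) • u + (y * b) • v := by
    ext i
    fin_cases i <;> simp [A] <;> ring
  refine ⟨⟨A, hA⟩, a, b, d / s * bracket u v, by simp [hAx], by simp [hAx], ?_⟩
  calc A *ᵥ ![d, 1] = (d / s) • (bracket w v • u + bracket u w • v) := by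
        rw [hAx, smul_add, smul_smul, smul_smul]
        congr 2 <;> ring
    _ = (d / s * bracket u v) • w := by rw [bracket_smul_add_bracket_smul, smul_smul]

/-- Ordered triples of points of the projective line. -/
abbrev PointTriple (F : Type) [Field F] : Type :=
  ℙ F (Fin 2 → F) × ℙ F (Fin 2 → F) × ℙ F (Fin 2 → F)

variable [Fintype F] [DecidableEq F]

/-- The orbit invariant of `PSL(2, q)` on ordered triples of points: the quadratic character of
`[p, q] [q, r] [r, p]`, where `[·, ·]` is the bracket of any representatives. Rescaling one of them
multiplies the product by a square. -/
def tripleSign (t : PointTriple F) : ℤ :=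
  quadraticChar F
    (bracket t.1.rep t.2.1.rep * bracket t.2.1.rep t.2.2.rep * bracket t.2.2.rep t.1.rep)

lemma quadraticChar_sq_mul {a : F} (ha : a ≠ 0) (b : F) :
    quadraticChar F (a ^ 2 * b) = quadraticChar F b := by
  rw [map_mul, quadraticChar_sq_one' ha, one_mul]

lemma tripleSign_mk {u v w : Fin 2 → F} (hu : u ≠ 0) (hv : v ≠ 0) (hw : w ≠ 0) :
    tripleSign (.mk F u hu, .mk F v hv, .mk F w hw) =
      quadraticChar F (bracket u v * bracket v w * bracket w u) := by
  obtain ⟨a, ha⟩ := Projectivization.exists_smul_eq_mk_rep F u hu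
  obtain ⟨b, hb⟩ := Projectivization.exists_smul_eq_mk_rep F v hv
  obtain ⟨c, hc⟩ := Projectivization.exists_smul_eq_mk_rep F w hw
  have habc : (a * b * c : F) ≠ 0 := by simp
  rw [tripleSign, ← ha, ← hb, ← hc, ← quadraticChar_sq_mul habc (bracket u v * _ * _)]
  simp only [Units.smul_def, bracket_smul_smul]
  congr 1
  ring

lemma tripleSign_embedPt (x y z : F) :
    tripleSign (embedPt F x, embedPt F y, embedPt F z) =
      quadraticChar F ((x - y) * (y - z) * (z - x)) := by
  simp [embedPt, tripleSign_mk, bracket_apply]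

lemma tripleSign_eq_zero_or (t : PointTriple F) :
    tripleSign t = 0 ∨ tripleSign t = 1 ∨ tripleSign t = -1 :=
  quadraticChar_isQuadratic F _

lemma tripleSign_ne_zero_iff {p q r : ℙ F (Fin 2 → F)} :
    tripleSign (p, q, r) ≠ 0 ↔ p ≠ q ∧ p ≠ r ∧ q ≠ r := by
  rw [tripleSign, Ne, quadraticChar_eq_zero_iff, ← Ne, mul_ne_zero_iff, mul_ne_zero_iff,
    bracket_rep_ne_zero_iff, bracket_rep_ne_zero_iff, bracket_rep_ne_zero_iff, ne_comm (a := r)]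
  tauto

lemma tripleSign_GL_smul (g : GL (Fin 2) F) (t : PointTriple F) :
    tripleSign (g • t) = quadraticChar F (g : Matrix (Fin 2) (Fin 2) F).det * tripleSign t := by
  obtain ⟨p, q, r⟩ := t
  induction p using Projectivization.ind with | _ u hu
  induction q using Projectivization.ind with | _ v hv
  induction r using Projectivization.ind with | _ w hw
  have hdet : (g : Matrix (Fin 2) (Fin 2) F).det ≠ 0 := g.det_ne_zero
  simp only [Prod.smul_mk, Projectivization.smul_mk, tripleSign_mk, Units.smul_def,
    Matrix.smul_eq_mulVec, bracket_mulVec]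
  rw [← map_mul, ← quadraticChar_sq_mul hdet (Matrix.det _ * (bracket u v * _ * _))]
  congr 1
  ring

lemma tripleSign_SL_smul (g : SpecialLinearGroup (Fin 2) F) (t : PointTriple F) :
    tripleSign (g • t) = tripleSign t := by
  have h := tripleSign_GL_smul (g : GL (Fin 2) F) t
  rwa [Matrix.SpecialLinearGroup.coe_GL_coe_matrix, g.det_coe, map_one, one_mul] at h

lemma sum_tripleSign [Fintype (ℙ F (Fin 2 → F))] (hF : ringChar F ≠ 2) :
    ∑ t : PointTriple F, tripleSign t = 0 := by
  obtain ⟨d, hd⟩ := quadraticChar_exists_neg_one' hF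
  let g : GL (Fin 2) F := .mkOfDetNeZero !![(d : F), 0; 0, 1] (by simp)
  have hg : quadraticChar F (g : Matrix (Fin 2) (Fin 2) F).det = -1 := by
    simpa [g, Matrix.GeneralLinearGroup.mkOfDetNeZero] using hd
  have h := Equiv.sum_comp (MulAction.toPerm g) (tripleSign (F := F))
  simp only [MulAction.toPerm_apply, tripleSign_GL_smul, hg, neg_one_mul,
    Finset.sum_neg_distrib] at h
  linarith

lemma exists_SL_smul_eq_of_tripleSign_eq_quadraticChar {d : F} (hd : d ≠ 0) {t : PointTriple F}
    (ht : tripleSign t = quadraticChar F d) :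
    ∃ g : SpecialLinearGroup (Fin 2) F, g • (inftyPt F, embedPt F 0, embedPt F d) = t := by
  obtain ⟨p, q, r⟩ := t
  induction p using Projectivization.ind with | _ u hu
  induction q using Projectivization.ind with | _ v hv
  induction r using Projectivization.ind with | _ w hw
  rw [tripleSign_mk] at ht
  have hD : bracket u v * bracket v w * bracket w u ≠ 0 := by
    rwa [Ne, ← quadraticChar_eq_zero_iff, ht, quadraticChar_eq_zero_iff]
  have hsq : IsSquare (d * (bracket u v * bracket v w * bracket w u)) := by
    rw [← quadraticChar_one_iff_isSquare (mul_ne_zero hd hD), map_mul, ht, ← sq,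
      quadraticChar_sq_one hd]
  obtain ⟨g, a, b, c, hp, hq, hr⟩ := exists_SL_mulVec_eq_smul hD hd hsq
  exact ⟨g, Prod.ext ((Projectivization.mk_eq_mk_iff' ..).2 ⟨a, hp.symm⟩)
    (Prod.ext ((Projectivization.mk_eq_mk_iff' ..).2 ⟨b, hq.symm⟩)
      ((Projectivization.mk_eq_mk_iff' ..).2 ⟨c, hr.symm⟩))⟩

lemma exists_SL_smul_eq_of_tripleSign_eq {s t : PointTriple F}
    (hs : tripleSign s ≠ 0) (hst : tripleSign s = tripleSign t) :
    ∃ g : SpecialLinearGroup (Fin 2) F, g • t = s := by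
  have hd := mt quadraticChar_eq_zero_iff.2 hs
  obtain ⟨g, hg⟩ := exists_SL_smul_eq_of_tripleSign_eq_quadraticChar hd rfl (t := s)
  obtain ⟨h, hh⟩ := exists_SL_smul_eq_of_tripleSign_eq_quadraticChar hd hst.symm
  exact ⟨g * h⁻¹, by rw [mul_smul, ← hh, inv_smul_smul, hg]⟩

lemma isThreeDesign_iff {k lam : ℕ} :
    isThreeDesign F k lam ↔ 0 < lam ∧ ∀ t : PointTriple F, tripleSign t ≠ 0 →
      tripleDegree (SpecialLinearGroup (Fin 2) F) (starterB F k) t = lam := by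
  classical
  have hdegree (p q r : ℙ F (Fin 2 → F)) :
      {S ∈ designBlocks F k | (({p, q, r} : Finset _) : Set _) ⊆ S}.ncard =
        tripleDegree (SpecialLinearGroup (Fin 2) F) (starterB F k) (p, q, r) := by
    simp [tripleDegree, designBlocks_eq_orbit, Set.insert_subset_iff]
  refine and_congr_right fun _ ↦ ⟨fun h t ht ↦ ?_, fun h T hT ↦ ?_⟩
  · obtain ⟨p, q, r⟩ := t
    rw [← hdegree]
    exact h _ (Finset.card_eq_three.2 ⟨p, q, r, (tripleSign_ne_zero_iff.1 ht).1,
      (tripleSign_ne_zero_iff.1 ht).2.1, (tripleSign_ne_zero_iff.1 ht).2.2, rfl⟩)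
  · obtain ⟨p, q, r, hpq, hpr, hqr, rfl⟩ := Finset.card_eq_three.1 hT
    rw [hdegree]
    exact h _ (tripleSign_ne_zero_iff.2 ⟨hpq, hpr, hqr⟩)

lemma gives3Design_iff_tripleDegree_eq {k : ℕ} {t₀ : PointTriple F} (ht₀ : tripleSign t₀ ≠ 0)
    (hmem : t₀ ∈ starterB F k ×ˢ starterB F k ×ˢ starterB F k) :
    gives3Design F k ↔ ∀ s t : PointTriple F, tripleSign s ≠ 0 → tripleSign t ≠ 0 →
      tripleDegree (SpecialLinearGroup (Fin 2) F) (starterB F k) s =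
        tripleDegree (SpecialLinearGroup (Fin 2) F) (starterB F k) t := by
  simp only [gives3Design, isThreeDesign_iff]
  refine ⟨fun ⟨_, _, h⟩ s t hs ht ↦ (h s hs).trans (h t ht).symm, fun h ↦ ?_⟩
  refine ⟨_, (Set.ncard_pos (Set.toFinite _)).2 ?_, fun t ht ↦ h t t₀ ht ht₀⟩
  exact ⟨starterB F k, MulAction.mem_orbit_self _, hmem⟩

lemma gives3Design_iff_tripleSum_eq_zero [Fintype (ℙ F (Fin 2 → F))] (hF : ringChar F ≠ 2)
    {k : ℕ} {t₀ : PointTriple F} (ht₀ : tripleSign t₀ ≠ 0)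
    (hmem : t₀ ∈ starterB F k ×ˢ starterB F k ×ˢ starterB F k) :
    gives3Design F k ↔ tripleSum tripleSign (starterB F k) = 0 := by
  have horbit : (MulAction.orbit (SpecialLinearGroup (Fin 2) F) (starterB F k)).ncard ≠ 0 :=
    (Set.ncard_pos (Set.toFinite _)).2 (MulAction.nonempty_orbit _) |>.ne'
  have hdegree (s t : PointTriple F) (hs : tripleSign s ≠ 0) (hst : tripleSign s = tripleSign t) :
      (tripleDegree (SpecialLinearGroup (Fin 2) F) (starterB F k) s : ℤ) =
        tripleDegree (SpecialLinearGroup (Fin 2) F) (starterB F k) t := by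
    obtain ⟨g, rfl⟩ := exists_SL_smul_eq_of_tripleSign_eq hs hst
    rw [tripleDegree_smul]
  have hiff := sum_sign_mul_eq_zero_iff tripleSign_eq_zero_or (sum_tripleSign hF) hdegree
  rw [sum_mul_tripleDegree tripleSign_SL_smul, mul_eq_zero, Nat.cast_eq_zero,
    or_iff_right horbit] at hiff
  rw [gives3Design_iff_tripleDegree_eq ht₀ hmem, hiff]
  simp only [Nat.cast_inj]

end ProjectiveLine

section RootsOfUnity

variable {F : Type} [Field F] [Fintype F] [DecidableEq F]

lemma tripleSum_starterB [Fintype (ℙ F (Fin 2 → F))] {k : ℕ} [NeZero k]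
    [Fintype (rootsOfUnity k F)] (hroots : ∀ x : rootsOfUnity k F, quadraticChar F (x : Fˣ) = 1)
    (hneg : quadraticChar F (-1) = 1) :
    tripleSum tripleSign (starterB F k) = Fintype.card (rootsOfUnity k F) *
      ∑ a : rootsOfUnity k F, ∑ b : rootsOfUnity k F, quadraticChar F (1 - (a : Fˣ)) *
        quadraticChar F (1 - (b : Fˣ)) * quadraticChar F (1 - (a : Fˣ) * (b : Fˣ)) := by
  simp only [starterB_eq_range, tripleSum_range (embedPt_rootsOfUnity_injective k),
    tripleSign_embedPt]
  rw [← nsmul_eq_mul, ← Finset.card_univ, ← Finset.sum_const]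
  refine Finset.sum_congr rfl fun x _ ↦ ?_
  rw [← Equiv.sum_comp (Equiv.mulLeft x)]
  refine Finset.sum_congr rfl fun a _ ↦ ?_
  rw [← Equiv.sum_comp (Equiv.mulLeft (x * a))]
  refine Finset.sum_congr rfl fun b _ ↦ ?_
  have hfactor (x a b : F) : (x - x * a) * (x * a - x * a * b) * (x * a * b - x) =
      -1 * (x * x * x * a) * ((1 - a) * (1 - b) * (1 - a * b)) := by ring
  simp only [Equiv.coe_mulLeft, Subgroup.coe_mul, Units.val_mul, hfactor]
  simp only [map_mul, hneg, hroots, one_mul]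

theorem gives3Design_iff_sum_rootsOfUnity_eq_zero (hF : ringChar F ≠ 2) {k : ℕ} [NeZero k]
    [Fintype (rootsOfUnity k F)] (hcard : 2 < Fintype.card (rootsOfUnity k F))
    (hroots : ∀ x : rootsOfUnity k F, quadraticChar F (x : Fˣ) = 1)
    (hneg : quadraticChar F (-1) = 1) :
    gives3Design F k ↔
      ∑ a : rootsOfUnity k F, ∑ b : rootsOfUnity k F, quadraticChar F (1 - (a : Fˣ)) *
        quadraticChar F (1 - (b : Fˣ)) * quadraticChar F (1 - (a : Fˣ) * (b : Fˣ)) = 0 := by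
  have : Fintype (ℙ F (Fin 2 → F)) := Fintype.ofFinite _
  obtain ⟨x, y, z, hxy, hxz, hyz⟩ := Fintype.two_lt_card_iff.1 hcard
  have hsign : tripleSign (embedPt F (x : Fˣ), embedPt F (y : Fˣ), embedPt F (z : Fˣ)) ≠ 0 :=
    have hinj := embedPt_rootsOfUnity_injective (F := F) k
    tripleSign_ne_zero_iff.2 ⟨hinj.ne hxy, hinj.ne hxz, hinj.ne hyz⟩
  have hmem (x : rootsOfUnity k F) : embedPt F (x : Fˣ) ∈ starterB F k := by
    rw [starterB_eq_range]
    exact Set.mem_range_self x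
  rw [gives3Design_iff_tripleSum_eq_zero hF hsign ⟨hmem x, hmem y, hmem z⟩,
    tripleSum_starterB hroots hneg, mul_eq_zero, Nat.cast_eq_zero, or_iff_right (by lia)]

/-- The sum of `h a * h b * h (a * b)` over the group `{±1} × A`, where `f` and `g` are the
restrictions of `h` to the cosets of `1` and `-1`. -/
def twistedCubicSum {A : Type*} [Add A] [Fintype A] (f g : A → ℤ) : ℤ :=
  ∑ a, ∑ b, (f a * f b * f (a + b) + f a * g b * g (a + b) +
    (g a * f b * g (a + b) + g a * g b * f (a + b)))

lemma addChar_zmod_pow_eq_one {m : ℕ} {R : Type*} [CommMonoid R] (ψ : AddChar (ZMod m) R)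
    (a : ZMod m) : ψ a ^ m = 1 := by
  rw [← AddChar.map_nsmul_eq_pow, nsmul_eq_mul, ZMod.natCast_self, zero_mul,
    AddChar.map_zero_eq_one]

lemma ringChar_ne_two_of_two_dvd_card_sub_one {K : Type*} [Field K] [Fintype K]
    (h : 2 ∣ Fintype.card K - 1) : ringChar K ≠ 2 := by
  intro hK
  have heven := FiniteField.even_card_of_char_two hK
  have hcard := Fintype.one_lt_card (α := K)
  lia

section SignedRoots

variable {K : Type*} [Field K] {m : ℕ} [NeZero m] {ψ : AddChar (ZMod m) K}

/-- The `2m`-th roots of unity `ψ a` and `-ψ a`, for a character `ψ` of `ℤ/m`. -/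
def signedRoot (ψ : AddChar (ZMod m) K) : ZMod m ⊕ ZMod m → rootsOfUnity (2 * m) K :=
  Sum.elim
    (fun a ↦ rootsOfUnity.mkOfPowEq (ψ a) (by rw [pow_mul', addChar_zmod_pow_eq_one, one_pow]))
    fun a ↦ rootsOfUnity.mkOfPowEq (-ψ a) (by
      rw [(even_two_mul m).neg_pow, pow_mul', addChar_zmod_pow_eq_one, one_pow])

lemma signedRoot_bijective (hK : ringChar K ≠ 2) (hm : Odd m) (hψ : Function.Injective ψ) :
    Function.Bijective (signedRoot ψ) := by
  have hneg (a b : ZMod m) : ψ a ≠ -ψ b := fun h ↦ by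
    have hpow := congrArg (· ^ m) h
    simp only [hm.neg_pow, addChar_zmod_pow_eq_one] at hpow
    exact Ring.neg_one_ne_one_of_char_ne_two hK hpow.symm
  have hval : Function.Injective (Sum.elim ψ fun a ↦ -ψ a) :=
    hψ.sumElim (neg_injective.comp hψ) hneg
  refine Function.Injective.bijective_of_nat_card_le (fun s t hst ↦ hval ?_) ?_
  · have := congrArg (fun x : rootsOfUnity (2 * m) K ↦ ((x : Kˣ) : K)) hst
    rcases s with s | s <;> rcases t with t | t <;> exact this
  · rw [Nat.card_sum, Nat.card_zmod, ← two_mul]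
    exact card_rootsOfUnity K (2 * m)

lemma sum_rootsOfUnity_two_mul [Fintype (rootsOfUnity (2 * m) K)] (hK : ringChar K ≠ 2)
    (hm : Odd m) (hψ : Function.Injective ψ) (h : K → ℤ) :
    ∑ x : rootsOfUnity (2 * m) K, h (x : Kˣ) = ∑ a, (h (ψ a) + h (-ψ a)) := by
  rw [← (signedRoot_bijective hK hm hψ).sum_comp, Fintype.sum_sum_type, Finset.sum_add_distrib]
  rfl

end SignedRoots

lemma quadraticChar_eq_one_of_pow_eq_one {k : ℕ} (hk : 2 * k ∣ Fintype.card F - 1) {x : F}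
    (hx : x ^ k = 1) : quadraticChar F x = 1 := by
  have hF := ringChar_ne_two_of_two_dvd_card_sub_one ((dvd_mul_right 2 k).trans hk)
  obtain ⟨n, hn⟩ := hk
  have hcard := Fintype.one_lt_card (α := F)
  have hx₀ : x ≠ 0 := by
    rintro rfl
    rcases eq_or_ne k 0 with rfl | hk₀
    · lia
    · exact zero_ne_one ((zero_pow hk₀).symm.trans hx)
  have hhalf : Fintype.card F / 2 = k * n := by
    rw [mul_assoc] at hn
    lia
  rw [quadraticChar_one_iff_isSquare hx₀, FiniteField.isSquare_iff hF hx₀, hhalf, pow_mul, hx,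
    one_pow]

theorem gives3Design_two_mul_iff_twistedCubicSum_eq_zero {m : ℕ} [NeZero m]
    {ψ : AddChar (ZMod m) F} (hq : 2 * (2 * m) ∣ Fintype.card F - 1) (hm : Odd m) (hm₁ : 1 < m)
    (hψ : Function.Injective ψ) :
    gives3Design F (2 * m) ↔ twistedCubicSum (fun a ↦ quadraticChar F (1 - ψ a))
      (fun a ↦ quadraticChar F (1 + ψ a)) = 0 := by
  have hF := ringChar_ne_two_of_two_dvd_card_sub_one ((dvd_mul_right 2 (2 * m)).trans hq)
  have hroots (x : rootsOfUnity (2 * m) F) : quadraticChar F (x : Fˣ) = 1 :=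
    quadraticChar_eq_one_of_pow_eq_one hq ((mem_rootsOfUnity' _ _).1 x.2)
  have hneg : quadraticChar F (-1) = 1 :=
    quadraticChar_eq_one_of_pow_eq_one hq (even_two_mul m).neg_one_pow
  have : Fintype (rootsOfUnity (2 * m) F) := Fintype.ofFinite _
  have hcard : 2 < Fintype.card (rootsOfUnity (2 * m) F) := by
    rw [← Fintype.card_of_bijective (signedRoot_bijective hF hm hψ), Fintype.card_sum, ZMod.card]
    lia
  have hinner (a : F) := sum_rootsOfUnity_two_mul hF hm hψ fun b : F ↦
    quadraticChar F (1 - a) * quadraticChar F (1 - b) * quadraticChar F (1 - a * b)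
  rw [gives3Design_iff_sum_rootsOfUnity_eq_zero hF hcard hroots hneg]
  simp only [hinner]
  rw [sum_rootsOfUnity_two_mul hF hm hψ fun a : F ↦ ∑ b,
    (quadraticChar F (1 - a) * quadraticChar F (1 - ψ b) * quadraticChar F (1 - a * ψ b) +
      quadraticChar F (1 - a) * quadraticChar F (1 - -ψ b) * quadraticChar F (1 - a * -ψ b))]
  simp only [twistedCubicSum, ← Finset.sum_add_distrib, AddChar.map_add_eq_mul, neg_mul, mul_neg,
    neg_neg, sub_neg_eq_add]

lemma quadraticChar_one_sub_inv {x : F} (hx : quadraticChar F x = 1)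
    (hneg : quadraticChar F (-1) = 1) :
    quadraticChar F (1 - x⁻¹) = quadraticChar F (1 - x) := by
  have hx₀ : x ≠ 0 := by
    rintro rfl
    simp at hx
  rw [show 1 - x = -1 * x * (1 - x⁻¹) by field_simp; ring, map_mul, map_mul, hneg, hx, one_mul,
    one_mul]

lemma quadraticChar_one_add {x : F} (hx : x ≠ 1) :
    quadraticChar F (1 + x) = quadraticChar F (1 - x ^ 2) * quadraticChar F (1 - x) := by
  rw [show 1 - x ^ 2 = (1 + x) * (1 - x) by ring, map_mul, mul_assoc, ← sq,
    quadraticChar_sq_one (sub_ne_zero.2 hx.symm), mul_one]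

lemma even_quadraticChar_one_sub_addChar {m : ℕ} (hq : 2 * (2 * m) ∣ Fintype.card F - 1)
    (ψ : AddChar (ZMod m) F) : (fun a ↦ quadraticChar F (1 - ψ a)).Even := by
  intro a
  simp only [AddChar.map_neg_eq_inv]
  refine quadraticChar_one_sub_inv (quadraticChar_eq_one_of_pow_eq_one hq ?_)
    (quadraticChar_eq_one_of_pow_eq_one hq (even_two_mul m).neg_one_pow)
  rw [pow_mul', addChar_zmod_pow_eq_one, one_pow]

end RootsOfUnity

section Thirteen

/-- The value of `twistedCubicSum f g / 12` on `ℤ/13`, for `f` an even sign function and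
`g a = f (2 * a) * f a`, in terms of `c = g 0` and `uᵢ = f (2 ^ i)`. As `2` is a primitive root
modulo 13, the indices are read modulo 6. -/
def signForm (u₀ u₁ u₂ u₃ u₄ u₅ c : ℤ) : ℤ :=
  (2 + c) * ((u₀ + u₃) + (u₁ + u₄) + (u₂ + u₅)) + (u₀ + u₃) * (u₁ + u₄) * (u₂ + u₅) +
    ((u₀ + u₃) * (u₁ * u₄) + (u₁ + u₄) * (u₂ * u₅) + (u₂ + u₅) * (u₀ * u₃)) +
    2 * ((u₀ + u₃) * (u₁ * u₄) * (u₂ * u₅) + (u₁ + u₄) * (u₂ * u₅) * (u₀ * u₃) +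
      (u₂ + u₅) * (u₀ * u₃) * (u₁ * u₄)) +
    3 * (u₀ * u₂ * u₄ + u₁ * u₃ * u₅)

lemma even_zmod_thirteen_natCast {f : ZMod 13 → ℤ} (hf : f.Even) (n : ℕ) :
    f n = [f 0, f 1, f 2, f 3, f 4, f 5, f 6, f 6, f 5, f 4, f 3, f 2, f 1].getD (n % 13) 0 := by
  have hlt := Nat.mod_lt n (show 13 > 0 by decide)
  rw [← ZMod.natCast_mod]
  interval_cases n % 13
  any_goals rfl
  all_goals exact (hf _).symm

lemma twistedCubicSum_zmod_thirteen {f g : ZMod 13 → ℤ} (hf : f.Even) (hf₀ : f 0 = 0)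
    (hsq : ∀ a ≠ 0, f a ^ 2 = 1) (hg : ∀ a ≠ 0, g a = f (2 * a) * f a) :
    twistedCubicSum f g = 12 * signForm (f 1) (f 2) (f 4) (f 5) (f 3) (f 6) (g 0) := by
  have hge : g.Even := fun a ↦ by
    rcases eq_or_ne a 0 with rfl | ha
    · simp
    · rw [hg a ha, hg (-a) (neg_ne_zero.2 ha), mul_neg, hf, hf]
  have g₁ : g 1 = f 2 * f 1 := hg 1 (by decide)
  have g₂ : g 2 = f 4 * f 2 := hg 2 (by decide)
  have g₃ : g 3 = f 6 * f 3 := hg 3 (by decide)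
  have g₄ : g 4 = f 5 * f 4 := (hg 4 (by decide)).trans (congrArg (· * f 4) (hf 5))
  have g₅ : g 5 = f 3 * f 5 := (hg 5 (by decide)).trans (congrArg (· * f 5) (hf 3))
  have g₆ : g 6 = f 1 * f 6 := (hg 6 (by decide)).trans (congrArg (· * f 6) (hf 1))
  have sum_eq (h : ZMod 13 → ℤ) : ∑ a, h a = ∑ n ∈ Finset.range 13, h n := by
    rw [Finset.sum_range]
    exact Finset.sum_congr rfl fun a _ ↦ congrArg h (ZMod.natCast_zmod_val a).symm
  have h₁ := hsq 1 (by decide)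
  have h₂ := hsq 2 (by decide)
  have h₃ := hsq 3 (by decide)
  have h₄ := hsq 4 (by decide)
  have h₅ := hsq 5 (by decide)
  have h₆ := hsq 6 (by decide)
  simp only [twistedCubicSum, sum_eq, ← Nat.cast_add, even_zmod_thirteen_natCast hf,
    even_zmod_thirteen_natCast hge, hf₀, g₁, g₂, g₃, g₄, g₅, g₆, Finset.sum_range_succ,
    Finset.sum_range_zero, Nat.reduceMod, Nat.reduceAdd, List.getD_cons_zero, List.getD_cons_succ,
    zero_add, add_zero, zero_mul, mul_zero, signForm]
  clear hf hge hsq hg sum_eq g₁ g₂ g₃ g₄ g₅ g₆ hf₀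
  generalize f 1 = x₁, f 2 = x₂, f 3 = x₃, f 4 = x₄, f 5 = x₅, f 6 = x₆, g 0 = c at *
  ring_nf
  grind

lemma signForm_eq_zero_iff : ∀ u₀ ∈ ({1, -1} : Finset ℤ), ∀ u₁ ∈ ({1, -1} : Finset ℤ),
    ∀ u₂ ∈ ({1, -1} : Finset ℤ), ∀ u₃ ∈ ({1, -1} : Finset ℤ), ∀ u₄ ∈ ({1, -1} : Finset ℤ),
    ∀ u₅ ∈ ({1, -1} : Finset ℤ), ∀ c ∈ ({1, -1} : Finset ℤ),
      signForm u₀ u₁ u₂ u₃ u₄ u₅ c = 0 ↔ u₃ = -u₀ ∧ u₄ = -u₁ ∧ u₅ = -u₂ := by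
  decide +kernel

end Thirteen

lemma goodChiSequence_iff {F : Type} [Field F] [Fintype F] [DecidableEq F] {β : F}
    (h₁ : β ≠ 1) (h₂ : β ^ 2 ≠ 1) (h₄ : β ^ 4 ≠ 1) :
    goodChiSequence F β ↔ quadraticChar F (1 - β ^ 5) = -quadraticChar F (1 - β) ∧
      quadraticChar F (1 - β ^ 3) = -quadraticChar F (1 - β ^ 2) ∧
      quadraticChar F (1 - β ^ 6) = -quadraticChar F (1 - β ^ 4) := by
  have sign₁ := quadraticChar_dichotomy (sub_ne_zero.2 h₁.symm)
  have sign₂ := quadraticChar_dichotomy (sub_ne_zero.2 h₂.symm)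
  have sign₄ := quadraticChar_dichotomy (sub_ne_zero.2 h₄.symm)
  simp only [goodChiSequence, Prod.mk.injEq]
  refine ⟨by grind, fun ⟨h₅, h₃, h₆⟩ ↦ ⟨_, sign₁, ?_⟩⟩
  rcases sign₁ with sign₁ | sign₁ <;> rcases sign₂ with sign₂ | sign₂ <;>
    rcases sign₄ with sign₄ | sign₄ <;> simp [sign₁, sign₂, sign₄, h₅, h₃, h₆]

lemma zmodChar_injective {R : Type*} [CommMonoid R] {n : ℕ} [NeZero n] {ζ : R}
    (hζ : IsPrimitiveRoot ζ n) : Function.Injective (AddChar.zmodChar n hζ.pow_eq_one) := by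
  intro a b hab
  simp only [AddChar.zmodChar_apply] at hab
  exact ZMod.val_injective n (hζ.pow_inj a.val_lt b.val_lt hab)

lemma twistedCubicSum_quadraticChar_eq_zero_iff {F : Type} [Field F] [Fintype F] [DecidableEq F]
    (hq : 2 * (2 * 13) ∣ Fintype.card F - 1) {ψ : AddChar (ZMod 13) F}
    (hψ : Function.Injective ψ) :
    twistedCubicSum (fun a ↦ quadraticChar F (1 - ψ a)) (fun a ↦ quadraticChar F (1 + ψ a)) = 0 ↔
      quadraticChar F (1 - ψ 5) = -quadraticChar F (1 - ψ 1) ∧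
      quadraticChar F (1 - ψ 3) = -quadraticChar F (1 - ψ 2) ∧
      quadraticChar F (1 - ψ 6) = -quadraticChar F (1 - ψ 4) := by
  have hψ₁ (a : ZMod 13) (ha : a ≠ 0) : ψ a ≠ 1 := AddChar.map_zero_eq_one ψ ▸ hψ.ne ha
  have hsub (a : ZMod 13) (ha : a ≠ 0) : 1 - ψ a ≠ 0 := sub_ne_zero.2 (hψ₁ a ha).symm
  have hsign {x : F} (hx : x ≠ 0) : quadraticChar F x ∈ ({1, -1} : Finset ℤ) := by
    simpa using quadraticChar_dichotomy hx
  have htwo : 1 + ψ 0 ≠ 0 := by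
    rw [AddChar.map_zero_eq_one, one_add_one_eq_two]
    exact Ring.two_ne_zero (ringChar_ne_two_of_two_dvd_card_sub_one ((dvd_mul_right 2 26).trans hq))
  rw [twistedCubicSum_zmod_thirteen (even_quadraticChar_one_sub_addChar hq ψ) (by simp)
    (fun a ha ↦ quadraticChar_sq_one (hsub a ha)) fun a ha ↦ by
      rw [quadraticChar_one_add (hψ₁ a ha), two_mul, AddChar.map_add_eq_mul, sq],
    mul_eq_zero, or_iff_right (by norm_num)]
  exact signForm_eq_zero_iff _ (hsign (hsub 1 (by decide))) _ (hsign (hsub 2 (by decide)))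
    _ (hsign (hsub 4 (by decide))) _ (hsign (hsub 5 (by decide))) _ (hsign (hsub 3 (by decide)))
    _ (hsign (hsub 6 (by decide))) _ (hsign htwo)

/-- Theorem 5.1, (ii) ↔ (iii): for `q ≡ 1 (mod 52)` and `β` a primitive 13th root
of unity, `(q,26)` gives a 3-design iff the sequence
`(χ(1-β), …, χ(1-β⁶))` is one of the eight listed sequences. -/
theorem stmt_19 (F : Type) [Field F] [Fintype F] [DecidableEq F]
    (q : ℕ) (hq : Fintype.card F = q) (hq52 : q % 52 = 1)
    (β : F) (hβ : orderOf β = 13) :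
    gives3Design F 26 ↔ goodChiSequence F β := by
  have hcard : 2 * (2 * 13) ∣ Fintype.card F - 1 := by lia
  have hprim : IsPrimitiveRoot β 13 := hβ ▸ IsPrimitiveRoot.orderOf β
  have hinj := zmodChar_injective hprim
  have hdesign := (gives3Design_two_mul_iff_twistedCubicSum_eq_zero hcard (by decide) (by lia)
    hinj).trans (twistedCubicSum_quadraticChar_eq_zero_iff hcard hinj)
  rw [goodChiSequence_iff (hprim.ne_one (by lia)) (hprim.pow_ne_one_of_pos_of_lt (by lia) (by lia))
    (hprim.pow_ne_one_of_pos_of_lt (by lia) (by lia))]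
  simpa [AddChar.zmodChar_apply, ZMod.val_ofNat, ZMod.val_one''] using hdesign
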